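/- Let $f \in W^{1,1}((0,T)) \cap C([0,T])$ attain its maximum over $[0,T]$ at a point $t_0 \in (0,T]$. Then the Riemann-Liouville fractional derivative of order $\alpha \in (0,1)$ of $f(\cdot) - f(0)$ is nonnegative at $t_0$: $\partial_t^\alpha (f - f(0))(t_0) \geq 0$. -/

import Mathlib

open MeasureTheory Set

noncomputable section

/-- Riemann–Liouville fractional derivative of order `α`:
`∂_t^α v (t) = d/dt ∫_0^t (t-s)^{-α}/Γ(1-α) · v(s) ds`. -/
def riemannLiouville (α : ℝ) (v : ℝ → ℝ) (t : ℝ) : ℝ :=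
  deriv (fun τ => ∫ s in Set.Ioc 0 τ, (τ - s) ^ (-α) / Real.Gamma (1 - α) * v s) t

theorem rl_ibp {α h ε : ℝ} (h0 : 0 < α) (h1 : α < 1) (hh : 0 < h) (he : h < ε)
    (a : ℝ → ℝ) (ha : Continuous a) (hP : ∀ r ∈ Icc h ε, 0 ≤ ∫ x in h..r, a x) :
    0 ≤ ∫ r in h..ε, ((r - h) ^ (-α) * r ^ α - 1) * a r := by
  set k : ℝ → ℝ := fun r => (r - h) ^ (-α) * r ^ α - 1 with hk
  set P : ℝ → ℝ := fun r => ∫ x in h..r, a x with hPdef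
  have hPd : ∀ r, HasDerivAt P (a r) r := fun r => ha.integral_hasStrictDerivAt h r |>.hasDerivAt
  have hra : Continuous fun r : ℝ => r ^ α := Real.continuous_rpow_const h0.le
  have hint0 : ∀ b c, IntervalIntegrable (fun r : ℝ => (r - h) ^ (-α)) volume b c := by
    intro b c
    have := (intervalIntegral.intervalIntegrable_rpow' (r := -α) (a := b - h) (b := c - h) (by linarith)).comp_sub_right h
    simpa using this
  have hint : ∀ b c, IntervalIntegrable (fun r : ℝ => k r * a r) volume b c := by
    intro b c
    exact (((hint0 b c).mul_continuousOn hra.continuousOn).sub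
      intervalIntegrable_const).mul_continuousOn ha.continuousOn
  set Ψ : ℝ → ℝ := fun x => (∫ r in h..x, k r * a r) - k x * P x with hΨ
  have hPh : P h = 0 := by simp [hPdef]
  have hPc : Continuous P := continuous_iff_continuousAt.2 fun r => (hPd r).continuousAt
  have hds : Continuous (dslope P h) := by
    rw [← continuousOn_univ, continuousOn_dslope Filter.univ_mem]
    exact ⟨hPc.continuousOn, (hPd h).differentiableAt⟩
  have hΨc : ContinuousOn Ψ (Icc h ε) := by
    have e : ContinuousOn (fun x => (∫ r in h..x, k r * a r)
        - ((x - h) ^ (1 - α) * dslope P h x * x ^ α - P x)) (Icc h ε) := by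
      apply ContinuousOn.sub
      · exact (intervalIntegral.continuous_primitive hint h).continuousOn
      · have : Continuous fun x : ℝ => (x - h) ^ (1 - α) :=
          (Real.continuous_rpow_const (by linarith)).comp (continuous_id.sub continuous_const)
        exact (((this.mul hds).mul hra).sub hPc).continuousOn
    refine e.congr ?_
    intro x hx
    simp only [hΨ, hk]
    congr 1
    rcases eq_or_lt_of_le hx.1 with rfl | hlt
    · simp [hPh, Real.zero_rpow (by linarith : 1 - α ≠ 0)]
    · have hpos : 0 < x - h := by linarith
      rw [dslope_of_ne _ hlt.ne', slope_def_field, hPh, sub_eq_add_neg 1 α, Real.rpow_add hpos, Real.rpow_one]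
      field_simp
      ring
  have hmono : MonotoneOn Ψ (Icc h ε) := by
    have hkd : ∀ x ∈ Ioo h ε, HasDerivAt k ((1 * (-α) * (x - h) ^ (-α - 1)) * x ^ α
        + (x - h) ^ (-α) * (α * x ^ (α - 1))) x := by
      intro x hx
      have d1 : HasDerivAt (fun r : ℝ => (r - h) ^ (-α)) (1 * (-α) * (x - h) ^ (-α - 1)) x :=
        ((hasDerivAt_id x).sub_const h).rpow_const (Or.inl (sub_pos.2 hx.1).ne')
      have d2 : HasDerivAt (fun r : ℝ => r ^ α) (α * x ^ (α - 1)) x :=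
        Real.hasDerivAt_rpow_const (Or.inl (hh.trans hx.1).ne')
      exact (d1.mul d2).sub_const 1
    have hd : ∀ x ∈ Ioo h ε, HasDerivAt Ψ (-(((1 * (-α) * (x - h) ^ (-α - 1)) * x ^ α
        + (x - h) ^ (-α) * (α * x ^ (α - 1))) * P x)) x := by
      intro x hx
      have d3 : HasDerivAt (fun x => ∫ r in h..x, k r * a r) (k x * a x) x := by
        refine intervalIntegral.integral_hasDerivAt_right (hint _ _) ?_
          ((hkd x hx).continuousAt.mul ha.continuousAt)
        apply ContinuousAt.stronglyMeasurableAtFilter isOpen_Ioo (s := Ioo h ε) _ x hx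
        intro y hy
        exact (hkd y hy).continuousAt.mul ha.continuousAt
      refine (d3.sub ((hkd x hx).mul (hPd x))).congr_deriv ?_
      ring
    refine monotoneOn_of_hasDerivWithinAt_nonneg (convex_Icc h ε) hΨc
      (f' := fun x => (-(((1 * (-α) * (x - h) ^ (-α - 1)) * x ^ α
        + (x - h) ^ (-α) * (α * x ^ (α - 1))) * P x))) ?_ ?_
    · intro x hx; rw [interior_Icc] at hx; exact (hd x hx).hasDerivWithinAt
    · intro x hx
      rw [interior_Icc] at hx
      have hpos : 0 < x - h := sub_pos.2 hx.1
      have hx0 : 0 < x := hh.trans hx.1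
      have e1 : (x - h) ^ (-α) = (x - h) ^ (-α - 1) * (x - h) := by
        rw [Real.rpow_sub_one hpos.ne']; field_simp
      have e2 : x ^ α = x ^ (α - 1) * x := by
        rw [Real.rpow_sub_one hx0.ne']; field_simp
      have hPx := hP x ⟨hx.1.le, hx.2.le⟩
      have p1 := Real.rpow_pos_of_pos hpos (-α - 1)
      have p2 := Real.rpow_pos_of_pos hx0 (α - 1)
      have : (-(((1 * (-α) * (x - h) ^ (-α - 1)) * x ^ α
        + (x - h) ^ (-α) * (α * x ^ (α - 1))) * P x)) =
        α * (x - h) ^ (-α - 1) * x ^ (α - 1) * h * P x := by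
        rw [e1, e2]; ring
      simp only [this]
      have : 0 ≤ P x := hPx
      positivity
  have hfin := hmono (left_mem_Icc.2 he.le) (right_mem_Icc.2 he.le) he.le
  have hkε : 0 ≤ k ε := by
    have hpos : 0 < ε - h := sub_pos.2 he
    have : 1 ≤ (ε - h) ^ (-α) * ε ^ α := by
      rw [Real.rpow_neg hpos.le, inv_mul_eq_div, one_le_div (by positivity)]
      exact Real.rpow_le_rpow hpos.le (by linarith) h0.le
    simp only [hk]; linarith
  have hPε : 0 ≤ P ε := hP ε (right_mem_Icc.2 he.le)
  simp only [hΨ, hPh, intervalIntegral.integral_same, mul_zero, sub_zero] at hfin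
  have := mul_nonneg hkε hPε
  linarith

theorem rl_int (α : ℝ) (h1 : α < 1) (w : ℝ → ℝ) (hw : Continuous w) (h b c : ℝ) :
    IntervalIntegrable (fun r : ℝ => (r - h) ^ (-α) * w r) volume b c := by
  have := (intervalIntegral.intervalIntegrable_rpow' (r := -α) (a := b - h) (b := c - h)
    (by linarith)).comp_sub_right h
  simp only [sub_add_cancel] at this
  exact this.mul_continuousOn hw.continuousOn

theorem rl_int_const (α : ℝ) (h1 : α < 1) (h b c : ℝ) :
    ∫ r in b..c, (r - h) ^ (-α) = ((c - h) ^ (1 - α) - (b - h) ^ (1 - α)) / (1 - α) := by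
  rw [intervalIntegral.integral_comp_sub_right (fun r => r ^ (-α)) h,
    integral_rpow (Or.inl (by linarith))]
  rw [show -α + 1 = 1 - α by ring]

theorem rl_core {α T ε c : ℝ} (h0 : 0 < α) (h1 : α < 1) (hε : 0 < ε) (hεT : ε ≤ T) (hc : 0 < c)
    (w : ℝ → ℝ) (hw : Continuous w) (hw0 : ∀ r, 0 ≤ w r) (hwz : w 0 = 0)
    (H : ∀ h ∈ Ioc 0 ε, c * h ≤ (∫ r in (0:ℝ)..T, r ^ (-α) * w r)
      - ∫ r in h..T, (r - h) ^ (-α) * w r) : False := by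
  have h1' : 0 < 1 - α := by linarith
  have hI0 : ∀ b c, IntervalIntegrable (fun r : ℝ => r ^ (-α) * w r) volume b c := by
    intro b c; simpa using rl_int α h1 w hw 0 b c
  have hJ0 : ∀ b c : ℝ, ∫ r in b..c, r ^ (-α) = (c ^ (1 - α) - b ^ (1 - α)) / (1 - α) := by
    intro b c; simpa using rl_int_const α h1 0 b c
  have hIn : ∀ b c : ℝ, IntervalIntegrable (fun r : ℝ => r ^ (-α)) volume b c := by
    intro b c; exact intervalIntegral.intervalIntegrable_rpow' (by linarith)
  set A : ℝ → ℝ := fun x => ∫ r in (0:ℝ)..x, r ^ (-α) * w r with hA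
  have key : ∀ h ∈ Ioc 0 ε, c * h ≤ A h + (∫ r in h..ε, r ^ (-α) * w r)
      - ∫ r in h..ε, (r - h) ^ (-α) * w r := by
    intro h hh
    have H' := H h hh
    have e1 := intervalIntegral.integral_add_adjacent_intervals
      (rl_int α h1 w hw h h ε) (rl_int α h1 w hw h ε T)
    have e2 := intervalIntegral.integral_add_adjacent_intervals (hI0 h ε) (hI0 ε T)
    have e3 := intervalIntegral.integral_add_adjacent_intervals (hI0 0 h) (hI0 h T)
    have m : (∫ r in ε..T, r ^ (-α) * w r) ≤ ∫ r in ε..T, (r - h) ^ (-α) * w r := by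
      apply intervalIntegral.integral_mono_on_of_le_Ioo hεT (hI0 _ _) (rl_int α h1 w hw h _ _)
      intro r hr
      apply mul_le_mul_of_nonneg_right _ (hw0 r)
      have := hh.1
      have := hh.2
      exact Real.rpow_le_rpow_of_nonpos (by linarith [hr.1]) (by linarith) (by linarith)
    simp only [hA]
    linarith
  set η := c * ε ^ α / 2 with hη
  have hη0 : 0 < η := by positivity
  have hAc : Continuous A := intervalIntegral.continuous_primitive hI0 0
  have hpc : Continuous fun x : ℝ => x ^ (1 - α) := Real.continuous_rpow_const h1'.le
  have hAε : η * ε ^ (1 - α) < A ε := by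
    have := key ε ⟨hε, le_rfl⟩
    simp only [intervalIntegral.integral_same, add_zero, sub_zero] at this
    have e : η * ε ^ (1 - α) = c * ε / 2 := by
      have : ε ^ α * ε ^ (1 - α) = ε := by
        rw [← Real.rpow_add hε]; simp
      calc η * ε ^ (1 - α) = c * (ε ^ α * ε ^ (1 - α)) / 2 := by rw [hη]; ring
        _ = _ := by rw [this]
    have : 0 < c * ε := by positivity
    linarith
  obtain ⟨δ, hδ, hδε, hAδ⟩ : ∃ δ, 0 < δ ∧ δ ≤ ε ∧ A δ ≤ η * δ ^ (1 - α) := by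
    have : ∀ᶠ r in nhds (0:ℝ), w r < η * (1 - α) := by
      apply hw.continuousAt.eventually_lt continuousAt_const
      rw [hwz]; positivity
    obtain ⟨d, hd, hdw⟩ := Metric.eventually_nhds_iff.1 this
    refine ⟨min (d / 2) ε, by positivity, min_le_right _ _, ?_⟩
    have hm : min (d/2) ε ≤ d / 2 := min_le_left _ _
    have hm0 : 0 < min (d/2) ε := by positivity
    set δ := min (d/2) ε
    calc A δ ≤ ∫ r in (0:ℝ)..δ, r ^ (-α) * (η * (1 - α)) := by
          apply intervalIntegral.integral_mono_on_of_le_Ioo hm0.le (hI0 _ _)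
            ((hIn _ _).mul_const _)
          intro r hr
          have hr0 : 0 < r := hr.1
          have hr1 : r < δ := hr.2
          apply mul_le_mul_of_nonneg_left _ (by positivity)
          apply le_of_lt
          apply hdw
          rw [Real.dist_eq, sub_zero, abs_of_pos hr0]; linarith
      _ = η * δ ^ (1 - α) := by
          rw [intervalIntegral.integral_mul_const, hJ0, Real.zero_rpow h1'.ne']
          field_simp
          ring
  have hS : IsCompact (Icc 0 ε ∩ {x | A x ≤ η * x ^ (1 - α)}) :=
    isCompact_Icc.inter_right (isClosed_le hAc (continuous_const.mul hpc))
  obtain ⟨h, ⟨hhI, hhA⟩, hmax⟩ := hS.exists_isGreatest ⟨δ, ⟨hδ.le, hδε⟩, hAδ⟩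
  have hh : 0 < h := lt_of_lt_of_le hδ (hmax ⟨⟨hδ.le, hδε⟩, hAδ⟩)
  simp only [mem_ofPred_eq] at hhA
  have he : h < ε := by
    rcases lt_or_eq_of_le hhI.2 with h' | h'
    · exact h'
    · rw [h'] at hhA; linarith
  have hgt : ∀ r ∈ Icc h ε, A h - η * h ^ (1 - α) ≤ A r - η * r ^ (1 - α) := by
    intro r hr
    rcases eq_or_lt_of_le hr.1 with rfl | hlt
    · exact le_rfl
    · have : ¬ (A r ≤ η * r ^ (1 - α)) := fun hcon =>
        absurd (hmax ⟨⟨hh.le.trans hr.1, hr.2⟩, hcon⟩) (not_le.2 hlt)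
      push Not at this
      linarith
  have hac : Continuous fun r : ℝ => (max r h) ^ (-α) * (w r - η * (1 - α)) := by
    apply Continuous.mul _ (hw.sub continuous_const)
    apply (continuous_id.max continuous_const).rpow_const
    intro x; left
    exact (lt_of_lt_of_le hh (le_max_right _ _)).ne'
  have hib := rl_ibp h0 h1 hh he _ hac (by
    intro r hr
    have e : ∫ x in h..r, (max x h) ^ (-α) * (w x - η * (1 - α)) =
        ∫ x in h..r, (x ^ (-α) * w x - x ^ (-α) * (η * (1 - α))) := by
      apply intervalIntegral.integral_congr
      intro x hx
      rw [uIcc_of_le hr.1] at hx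
      simp only [max_eq_left hx.1]; ring
    rw [e, intervalIntegral.integral_sub (hI0 _ _) ((hIn _ _).mul_const _),
      intervalIntegral.integral_mul_const, hJ0]
    have e3 := intervalIntegral.integral_add_adjacent_intervals (hI0 0 h) (hI0 h r)
    have := hgt r hr
    have e4 : (r ^ (1 - α) - h ^ (1 - α)) / (1 - α) * (η * (1 - α)) =
      η * r ^ (1 - α) - η * h ^ (1 - α) := by field_simp
    rw [e4]
    simp only [hA] at this
    linarith)
  have e5 : ∫ r in h..ε, ((r - h) ^ (-α) * r ^ α - 1) * ((max r h) ^ (-α) * (w r - η * (1 - α))) =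
      ∫ r in h..ε, (((r - h) ^ (-α) * w r - r ^ (-α) * w r) -
        ((r - h) ^ (-α) * (η * (1 - α)) - r ^ (-α) * (η * (1 - α)))) := by
    apply intervalIntegral.integral_congr
    intro x hx
    rw [uIcc_of_le he.le] at hx
    have hx0 : 0 < x := hh.trans_le hx.1
    have : x ^ α * x ^ (-α) = 1 := by rw [← Real.rpow_add hx0]; simp
    simp only [max_eq_left hx.1]
    linear_combination ((x - h) ^ (-α) * (w x - η * (1 - α))) * this
  have c1 := rl_int α h1 (fun _ => η * (1 - α)) continuous_const h h ε
  have c2 : IntervalIntegrable (fun r : ℝ => r ^ (-α) * (η * (1 - α))) volume h ε :=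
    (hIn _ _).mul_const _
  rw [e5, intervalIntegral.integral_sub ((rl_int α h1 w hw h _ _).sub (hI0 _ _)) (c1.sub c2),
    intervalIntegral.integral_sub (rl_int α h1 w hw h _ _) (hI0 _ _),
    intervalIntegral.integral_sub c1 c2, intervalIntegral.integral_mul_const,
    intervalIntegral.integral_mul_const, hJ0, rl_int_const α h1, sub_self,
    Real.zero_rpow h1'.ne'] at hib
  have e6 : ((ε - h) ^ (1 - α) - 0) / (1 - α) * (η * (1 - α)) = η * (ε - h) ^ (1 - α) := by
    field_simp
    ring
  have e7 : (ε ^ (1 - α) - h ^ (1 - α)) / (1 - α) * (η * (1 - α)) =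
      η * ε ^ (1 - α) - η * h ^ (1 - α) := by field_simp
  rw [e6, e7] at hib
  have hk := key h ⟨hh, he.le⟩
  have conc : ε ^ (1 - α) * ((ε - h) / ε) ≤ (ε - h) ^ (1 - α) := by
    have hy0 : 0 < (ε - h) / ε := div_pos (by linarith) hε
    have hy1 : (ε - h) / ε ≤ 1 := by rw [div_le_one hε]; linarith
    have := Real.rpow_le_rpow_of_exponent_ge hy0 hy1 (by linarith : 1 - α ≤ 1)
    rw [Real.rpow_one, Real.div_rpow (by linarith) hε.le, le_div_iff₀ (by positivity)] at this
    linarith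
  have e8 : η * (ε ^ (1 - α) * ((ε - h) / ε)) = η * ε ^ (1 - α) - c * h / 2 := by
    have : ε ^ α * ε ^ (1 - α) = ε := by
      rw [← Real.rpow_add hε]; simp
    have e9 : η * ε ^ (1 - α) = c * ε / 2 := by
      calc η * ε ^ (1 - α) = c * (ε ^ α * ε ^ (1 - α)) / 2 := by rw [hη]; ring
        _ = _ := by rw [this]
    rw [← mul_assoc, e9]
    field_simp
  have := mul_le_mul_of_nonneg_left conc hη0.le
  have : 0 < c * h := by positivity
  linarith

theorem rl_deriv_nonneg_at_max (T α : ℝ) (hT : 0 < T) (hα : α ∈ Ioo (0:ℝ) 1)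
    (f f' : ℝ → ℝ)
    (hfc : ContinuousOn f (Icc 0 T))
    (hfderiv : ∀ t ∈ Ioo 0 T, HasDerivAt f (f' t) t)
    (hf'int : IntegrableOn f' (Ioc 0 T))
    (t0 : ℝ) (ht0 : t0 ∈ Ioc 0 T)
    (hmax : ∀ s ∈ Icc 0 T, f s ≤ f t0) :
    0 ≤ riemannLiouville α (fun t => f t - f 0) t0 := by
  obtain ⟨h0, h1⟩ := hα
  have h1' : 0 < 1 - α := by linarith
  have hG : 0 < Real.Gamma (1 - α) := Real.Gamma_pos_of_pos h1'
  unfold riemannLiouville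
  set F : ℝ → ℝ := fun τ => ∫ s in Set.Ioc 0 τ, (τ - s) ^ (-α) / Real.Gamma (1 - α) * (f s - f 0)
    with hF
  by_contra hneg
  push Not at hneg
  have hdiff : DifferentiableAt ℝ F t0 := by
    by_contra hnd
    rw [deriv_zero_of_not_differentiableAt hnd] at hneg
    exact lt_irrefl _ hneg
  set D := deriv F t0 with hD
  have hderiv : HasDerivAt F D t0 := hdiff.hasDerivAt
  set w : ℝ → ℝ := fun r => f t0 - f (projIcc 0 T hT.le (t0 - r)) with hwdef
  have hw : Continuous w := by
    apply continuous_const.sub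
    have : Continuous (fun x : Icc (0:ℝ) T => f x) := hfc.domRestrict
    exact this.comp (continuous_projIcc.comp (continuous_const.sub continuous_id))
  have hw0 : ∀ r, 0 ≤ w r := fun r => sub_nonneg.2 (hmax _ (projIcc 0 T hT.le (t0 - r)).2)
  have hwz : w 0 = 0 := by
    simp only [hwdef, sub_zero, projIcc_of_mem hT.le (⟨ht0.1.le, ht0.2⟩ : t0 ∈ Icc 0 T), sub_self]
  have hM : 0 ≤ f t0 - f 0 := sub_nonneg.2 (hmax 0 (left_mem_Icc.2 hT.le))
  have hFe : ∀ h, 0 ≤ h → h ≤ t0 → Real.Gamma (1 - α) * F (t0 - h) =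
      (t0 - h) ^ (1 - α) / (1 - α) * (f t0 - f 0) - ∫ r in h..t0, (r - h) ^ (-α) * w r := by
    intro h hh hht
    have e1 : F (t0 - h) = ∫ r in h..t0,
        (Real.Gamma (1 - α))⁻¹ * ((r - h) ^ (-α) * (f t0 - f 0) - (r - h) ^ (-α) * w r) := by
      simp only [hF]
      rw [← intervalIntegral.integral_of_le (by linarith)]
      have := intervalIntegral.integral_comp_sub_left (a := h) (b := t0)
        (fun s => (t0 - h - s) ^ (-α) / Real.Gamma (1 - α) * (f s - f 0)) t0
      rw [sub_self] at this
      rw [← this]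
      apply intervalIntegral.integral_congr
      intro r hr
      rw [uIcc_of_le hht] at hr
      have hmem : t0 - r ∈ Icc 0 T := ⟨by linarith [hr.2], by linarith [hr.1, ht0.2]⟩
      simp only [hwdef, projIcc_of_mem hT.le hmem]
      rw [show t0 - h - (t0 - r) = r - h by ring]
      field_simp
      ring
    rw [e1, intervalIntegral.integral_const_mul, intervalIntegral.integral_sub
      (rl_int α h1 (fun _ => f t0 - f 0) continuous_const h _ _) (rl_int α h1 w hw h _ _),
      intervalIntegral.integral_mul_const, rl_int_const α h1, sub_self, Real.zero_rpow h1'.ne',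
      sub_zero, mul_inv_cancel_left₀ hG.ne']
  have hlo : ∃ d > 0, ∀ h, 0 < h → h < d → F t0 - F (t0 - h) ≤ D / 2 * h := by
    have := (hasDerivAt_iff_isLittleO.1 hderiv).def (c := -D / 2) (by linarith)
    obtain ⟨d, hd, hdd⟩ := Metric.eventually_nhds_iff.1 this
    refine ⟨d, hd, fun h hh hhd => ?_⟩
    have := hdd (y := t0 - h) (by
      rw [Real.dist_eq, show t0 - h - t0 = -h by ring, abs_neg, abs_of_pos hh]; exact hhd)
    rw [show t0 - h - t0 = -h by ring, norm_neg, Real.norm_eq_abs, Real.norm_eq_abs,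
      abs_of_pos hh, abs_le, smul_eq_mul] at this
    linarith [this.1]
  obtain ⟨d, hd, hdd⟩ := hlo
  have hc : 0 < Real.Gamma (1 - α) * (-D / 2) := mul_pos hG (by linarith)
  have ht := ht0.1
  refine rl_core (T := t0) (ε := min (d / 2) t0) h0 h1 (by positivity) (min_le_right _ _) hc w hw
    hw0 hwz ?_
  intro h hh
  have hh1 : h ≤ d / 2 := hh.2.trans (min_le_left _ _)
  have hh2 : h ≤ t0 := hh.2.trans (min_le_right _ _)
  have hh0 : 0 < h := hh.1
  have a1 := hFe 0 le_rfl ht.le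
  have a2 := hFe h hh0.le hh2
  simp only [sub_zero] at a1
  have a3 := mul_le_mul_of_nonneg_left (hdd h hh0 (by linarith)) hG.le
  have a4 : (t0 - h) ^ (1 - α) / (1 - α) * (f t0 - f 0) ≤ t0 ^ (1 - α) / (1 - α) * (f t0 - f 0) := by
    apply mul_le_mul_of_nonneg_right _ hM
    apply div_le_div_of_nonneg_right _ h1'.le
    exact Real.rpow_le_rpow (by linarith) (by linarith) h1'.le
  linarith
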